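/- Let R̂^m_{jkl} = ∂γ^m_{lj}/∂y^k − ∂γ^m_{kj}/∂y^l + Σ_r (γ^m_{kr} γ^r_{lj} − γ^m_{lr} γ^r_{kj}) be the curvature tensor of the Levi-Civita connection of the Hessian metric g (whose Christoffel symbols equal γ^i_{jl}), and set R_{ijkl} = Σ_m g_{im} R̂^m_{jkl}. Then R_{ijkl} = ½ (Q_{ijkl} − Q_{jikl}) for all i,j,k,l at every point of U. -/

import Mathlib

/-!
Write `T_{abc}` and `F_{abcd}` for the third and fourth partial derivatives of `φ`, totally
symmetric in their indices, and put `A(ab,cd) = Σ_r T_{abr} γ^r_{cd} = ½ Σ_{r,s} T_{abr} g^{rs} T_{scd}`.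
Since `g⁻¹` is symmetric, `A(ab,cd) = A(cd,ab)` (`cubicContr_symm`).

Lowering the index of `γ` gives `Σ_r g_{ir} γ^r_{jl} = ½ T_{ijl}` on `U` (`sum_hess_mul_gam`).
Differentiating this identity, instead of the formula for `γ` itself, avoids the derivative of the
inverse matrix and yields `Q_{ijkl} = ½ F_{ijkl} − A(ki,jl)` (`Qlow_eq`). Both sides of the theorem
then equal `½ (A(il,kj) − A(ik,lj))`: the two derivative terms of `R̂` contribute
`A(il,kj) − A(ik,lj)` and the quadratic terms contribute minus one half of that.
-/

/-- Partial derivative in the `i`-th coordinate direction. -/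
noncomputable def pd {q : ℕ} (i : Fin q) (f : (Fin q → ℝ) → ℝ) (y : Fin q → ℝ) : ℝ :=
  fderiv ℝ f y (Pi.single i 1)

/-- The Hessian metric `g_{ij} = ∂²φ/∂y^i∂y^j` of the potential `φ`. -/
noncomputable def hess {q : ℕ} (φ : (Fin q → ℝ) → ℝ) (y : Fin q → ℝ) (i j : Fin q) : ℝ :=
  pd i (pd j φ) y

/-- Entries `g^{ij}` of the inverse of the Hessian matrix of `φ`. -/
noncomputable def hessInv {q : ℕ} (φ : (Fin q → ℝ) → ℝ) (y : Fin q → ℝ) (i j : Fin q) : ℝ :=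
  (Matrix.of (hess φ y))⁻¹ i j

/-- The difference tensor `γ^i_{jl} = ½ Σ_s g^{is} ∂³φ/∂y^s∂y^j∂y^l` between the
Levi-Civita connection of the Hessian metric and the standard flat connection. -/
noncomputable def gam {q : ℕ} (φ : (Fin q → ℝ) → ℝ) (i j l : Fin q) (y : Fin q → ℝ) : ℝ :=
  (1 / 2) * ∑ s, hessInv φ y i s * pd s (pd j (pd l φ)) y

/-- The Hessian curvature tensor `Q^i_{jkl} = ∂γ^i_{jl}/∂y^k`. -/
noncomputable def Qup {q : ℕ} (φ : (Fin q → ℝ) → ℝ) (i j k l : Fin q) (y : Fin q → ℝ) : ℝ :=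
  pd k (gam φ i j l) y

/-- The lowered Hessian curvature tensor `Q_{ijkl} = Σ_r g_{ir} Q^r_{jkl}`. -/
noncomputable def Qlow {q : ℕ} (φ : (Fin q → ℝ) → ℝ) (i j k l : Fin q) (y : Fin q → ℝ) : ℝ :=
  ∑ r, hess φ y i r * Qup φ r j k l y

/-- Curvature tensor `R̂^m_{jkl} = ∂γ^m_{lj}/∂y^k − ∂γ^m_{kj}/∂y^l +
Σ_r (γ^m_{kr} γ^r_{lj} − γ^m_{lr} γ^r_{kj})` of the Levi-Civita connection of the
Hessian metric (whose Christoffel symbols equal `γ^i_{jl}`). -/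
noncomputable def riem {q : ℕ} (φ : (Fin q → ℝ) → ℝ) (m j k l : Fin q)
    (y : Fin q → ℝ) : ℝ :=
  pd k (gam φ m l j) y - pd l (gam φ m k j) y +
    ∑ r, (gam φ m k r y * gam φ r l j y - gam φ m l r y * gam φ r k j y)

section HessianCurvature

variable {q : ℕ} {U : Set (Fin q → ℝ)} {φ f h : (Fin q → ℝ) → ℝ} {y : Fin q → ℝ}

lemma contDiffOn_pd (hU : IsOpen U) (hf : ContDiffOn ℝ (⊤ : ℕ∞) f U) (i : Fin q) :
    ContDiffOn ℝ (⊤ : ℕ∞) (pd i f) U :=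
  (hf.fderiv_of_isOpen hU (by simp)).clm_apply contDiffOn_const

lemma differentiableAt_of_smooth (hU : IsOpen U) (hf : ContDiffOn ℝ (⊤ : ℕ∞) f U) (hy : y ∈ U) :
    DifferentiableAt ℝ f y :=
  (hf.contDiffAt (hU.mem_nhds hy)).differentiableAt (by simp)

lemma pd_congr (hU : IsOpen U) (hfh : ∀ z ∈ U, f z = h z) (hy : y ∈ U) (i : Fin q) :
    pd i f y = pd i h y := by
  have : f =ᶠ[nhds y] h := Filter.eventuallyEq_of_mem (hU.mem_nhds hy) hfh
  simp only [pd, this.fderiv_eq]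

lemma pd_comm (hU : IsOpen U) (hf : ContDiffOn ℝ (⊤ : ℕ∞) f U) (hy : y ∈ U) (i j : Fin q) :
    pd i (pd j f) y = pd j (pd i f) y := by
  have hd : DifferentiableAt ℝ (fderiv ℝ f) y :=
    ((hf.fderiv_of_isOpen (m := (⊤ : ℕ∞)) hU (by simp)).contDiffAt
      (hU.mem_nhds hy)).differentiableAt (by simp)
  have key : ∀ a b : Fin q, pd a (pd b f) y =
      fderiv ℝ (fderiv ℝ f) y (Pi.single a 1) (Pi.single b 1) := by
    intro a b
    change fderiv ℝ (fun z => fderiv ℝ f z (Pi.single b 1)) y (Pi.single a 1) = _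
    rw [fderiv_clm_apply hd (differentiableAt_const _)]
    simp
  rw [key, key]
  exact ((hf.contDiffAt (hU.mem_nhds hy)).isSymmSndFDerivAt
    (by simp [minSmoothness_of_isRCLikeNormedField]; exact WithTop.coe_le_coe.2 le_top)) _ _

/-- Transposition of the two inner indices of a third derivative. -/
lemma pd_comm_inner (hU : IsOpen U) (hf : ContDiffOn ℝ (⊤ : ℕ∞) f U) (hy : y ∈ U)
    (a b c : Fin q) : pd a (pd b (pd c f)) y = pd a (pd c (pd b f)) y :=
  pd_congr hU (fun _ hz => pd_comm hU hf hz b c) hy a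

lemma differentiableAt_det {n : ℕ} {M : (Fin q → ℝ) → Matrix (Fin n) (Fin n) ℝ}
    (hM : ∀ a b, DifferentiableAt ℝ (fun z => M z a b) y) :
    DifferentiableAt ℝ (fun z => (M z).det) y := by
  simp only [Matrix.det_apply]
  fun_prop

lemma differentiableAt_hessInv (hU : IsOpen U) (hφ : ContDiffOn ℝ (⊤ : ℕ∞) φ U)
    (hpos : ∀ z ∈ U, (Matrix.of (hess φ z)).PosDef) (hy : y ∈ U) (i j : Fin q) :
    DifferentiableAt ℝ (fun z => hessInv φ z i j) y := by
  have hh : ∀ a b, DifferentiableAt ℝ (fun z => hess φ z a b) y := fun a b =>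
    differentiableAt_of_smooth hU (contDiffOn_pd hU (contDiffOn_pd hU hφ b) a) hy
  have hdet : DifferentiableAt ℝ (fun z => (Matrix.of (hess φ z)).det) y :=
    differentiableAt_det hh
  have hadj : DifferentiableAt ℝ (fun z => (Matrix.of (hess φ z)).adjugate i j) y := by
    simp only [Matrix.adjugate_apply]
    refine differentiableAt_det fun a b => ?_
    by_cases ha : a = j
    · simp [ha]
    · simpa [Matrix.updateRow_ne ha] using hh a b
  simp only [hessInv, Matrix.inv_def, Ring.inverse_eq_inv', Matrix.smul_apply, smul_eq_mul]
  exact (hdet.inv (hpos y hy).det_pos.ne').mul hadj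

lemma differentiableAt_gam (hU : IsOpen U) (hφ : ContDiffOn ℝ (⊤ : ℕ∞) φ U)
    (hpos : ∀ z ∈ U, (Matrix.of (hess φ z)).PosDef) (hy : y ∈ U) (i j l : Fin q) :
    DifferentiableAt ℝ (gam φ i j l) y := by
  unfold gam
  refine (DifferentiableAt.fun_sum fun s _ => ?_).const_mul _
  exact (differentiableAt_hessInv hU hφ hpos hy i s).mul (differentiableAt_of_smooth hU
    (contDiffOn_pd hU (contDiffOn_pd hU (contDiffOn_pd hU hφ l) j) s) hy)

lemma sum_hess_mul_gam (hpos : (Matrix.of (hess φ y)).PosDef) (i j l : Fin q) :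
    ∑ r, hess φ y i r * gam φ r j l y = (1 / 2) * pd i (pd j (pd l φ)) y := by
  have hmul : Matrix.of (hess φ y) * (Matrix.of (hess φ y))⁻¹ = 1 :=
    Matrix.mul_nonsing_inv _ hpos.det_pos.ne'.isUnit
  have hent : ∀ s, ∑ r, hess φ y i r * hessInv φ y r s = if i = s then 1 else 0 := by
    intro s
    have := congrFun (congrFun hmul i) s
    rwa [Matrix.mul_apply, Matrix.one_apply] at this
  calc ∑ r, hess φ y i r * gam φ r j l y
      = (1 / 2) * ∑ r, ∑ s, hess φ y i r * hessInv φ y r s * pd s (pd j (pd l φ)) y := by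
        simp only [gam, Finset.mul_sum]
        exact Finset.sum_congr rfl fun r _ => Finset.sum_congr rfl fun s _ => by ring
    _ = (1 / 2) * pd i (pd j (pd l φ)) y := by
        rw [Finset.sum_comm]
        simp only [← Finset.sum_mul, hent]
        simp

/-- The contraction `A(ab,cd) = Σ_r (∂_a ∂_b ∂_r φ) γ^r_{cd}`, which carries the part of the
Hessian curvature that is quadratic in the third derivatives of `φ`. -/
noncomputable def cubicContr (φ : (Fin q → ℝ) → ℝ) (y : Fin q → ℝ) (a b c d : Fin q) : ℝ :=
  ∑ r, pd a (pd b (pd r φ)) y * gam φ r c d y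

/-- `A(ab,cd) = A(cd,ab)`, by symmetry of `g⁻¹` and of the third derivatives. -/
lemma cubicContr_symm (hU : IsOpen U) (hφ : ContDiffOn ℝ (⊤ : ℕ∞) φ U)
    (hpos : (Matrix.of (hess φ y)).PosDef) (hy : y ∈ U) (a b c d : Fin q) :
    cubicContr φ y a b c d = cubicContr φ y c d a b := by
  have hinv : ∀ r s, hessInv φ y r s = hessInv φ y s r := fun r s => by
    simpa [hessInv] using (hpos.isHermitian.inv.apply s r)
  have hcyc : ∀ a b r, pd a (pd b (pd r φ)) y = pd r (pd a (pd b φ)) y := fun a b r => by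
    rw [pd_comm_inner hU hφ hy a b r, pd_comm hU (contDiffOn_pd hU hφ b) hy a r]
  simp only [cubicContr, gam, Finset.mul_sum]
  rw [Finset.sum_comm]
  refine Finset.sum_congr rfl fun s _ => Finset.sum_congr rfl fun r _ => ?_
  rw [hcyc a b r, hcyc c d s, hinv r s]
  ring

/-- `A` is symmetric in its first pair of indices. -/
lemma cubicContr_swap_left (hU : IsOpen U) (hφ : ContDiffOn ℝ (⊤ : ℕ∞) φ U) (hy : y ∈ U)
    (a b c d : Fin q) : cubicContr φ y a b c d = cubicContr φ y b a c d :=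
  Finset.sum_congr rfl fun r _ => by rw [pd_comm hU (contDiffOn_pd hU hφ r) hy a b]

/-- `A` is symmetric in its second pair of indices. -/
lemma cubicContr_swap_right (hU : IsOpen U) (hφ : ContDiffOn ℝ (⊤ : ℕ∞) φ U) (hy : y ∈ U)
    (a b c d : Fin q) : cubicContr φ y a b c d = cubicContr φ y a b d c := by
  simp only [cubicContr, gam, pd_comm_inner hU hφ hy _ c d]

/-- `Q_{ijkl} = ½ ∂_k ∂_i ∂_j ∂_l φ − A(ki,jl)`, the derivative of `sum_hess_mul_gam`. -/
lemma Qlow_eq (hU : IsOpen U) (hφ : ContDiffOn ℝ (⊤ : ℕ∞) φ U)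
    (hpos : ∀ z ∈ U, (Matrix.of (hess φ z)).PosDef) (hy : y ∈ U) (i j k l : Fin q) :
    Qlow φ i j k l y =
      (1 / 2) * pd k (pd i (pd j (pd l φ))) y - cubicContr φ y k i j l := by
  have hh : ∀ r, DifferentiableAt ℝ (fun z => hess φ z i r) y := fun r =>
    differentiableAt_of_smooth hU (contDiffOn_pd hU (contDiffOn_pd hU hφ r) i) hy
  have hg : ∀ r, DifferentiableAt ℝ (gam φ r j l) y := fun r =>
    differentiableAt_gam hU hφ hpos hy r j l
  have hT : DifferentiableAt ℝ (pd i (pd j (pd l φ))) y := differentiableAt_of_smooth hU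
    (contDiffOn_pd hU (contDiffOn_pd hU (contDiffOn_pd hU hφ l) j) i) hy
  have key := pd_congr hU (f := fun z => ∑ r, hess φ z i r * gam φ r j l z)
    (h := fun z => (1 / 2) * pd i (pd j (pd l φ)) z)
    (fun z hz => sum_hess_mul_gam (hpos z hz) i j l) hy k
  have hL : pd k (fun z => ∑ r, hess φ z i r * gam φ r j l z) y
      = Qlow φ i j k l y + cubicContr φ y k i j l := by
    unfold pd
    rw [fderiv_fun_sum fun r _ => (hh r).fun_mul (hg r), sum_apply]
    simp only [Qlow, cubicContr, ← Finset.sum_add_distrib]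
    refine Finset.sum_congr rfl fun r _ => ?_
    rw [fderiv_fun_mul (hh r) (hg r)]
    change hess φ y i r * Qup φ r j k l y + gam φ r j l y * pd k (pd i (pd r φ)) y = _
    ring
  have hR : pd k (fun z => (1 / 2) * pd i (pd j (pd l φ)) z) y
      = (1 / 2) * pd k (pd i (pd j (pd l φ))) y := by
    change fderiv ℝ (fun z => (1 / 2) * pd i (pd j (pd l φ)) z) y _ = _
    rw [fderiv_const_mul hT]
    rfl
  linarith

/-- Lowering the index of the quadratic part `Σ_r γ^m_{ar} γ^r_{bc}` gives `½ A(ia,bc)`. -/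
lemma sum_hess_mul_gam_mul_gam (hpos : (Matrix.of (hess φ y)).PosDef) (i a b c : Fin q) :
    ∑ m, hess φ y i m * ∑ r, gam φ m a r y * gam φ r b c y
      = (1 / 2) * cubicContr φ y i a b c := by
  simp only [cubicContr, Finset.mul_sum]
  rw [Finset.sum_comm]
  refine Finset.sum_congr rfl fun r _ => ?_
  simp only [← mul_assoc, ← Finset.sum_mul]
  rw [sum_hess_mul_gam hpos]

end HessianCurvature

/-- `R_{ijkl} = ½ (Q_{ijkl} − Q_{jikl})` where
`R_{ijkl} = Σ_m g_{im} R̂^m_{jkl}`. -/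
theorem riemann_eq_antisym_hessian_curvature
    {q : ℕ} (U : Set (Fin q → ℝ)) (hU : IsOpen U)
    (φ : (Fin q → ℝ) → ℝ) (hφ : ContDiffOn ℝ (⊤ : ℕ∞) φ U)
    (hposdef : ∀ y ∈ U, (Matrix.of (hess φ y)).PosDef) :
    ∀ y ∈ U, ∀ i j k l,
      ∑ m, hess φ y i m * riem φ m j k l y
        = (1 / 2) * (Qlow φ i j k l y - Qlow φ j i k l y) := by
  intro y hy i j k l
  have hlow : ∑ m, hess φ y i m * riem φ m j k l y
      = Qlow φ i l k j y - Qlow φ i k l j y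
        + ((1 / 2) * cubicContr φ y i k l j - (1 / 2) * cubicContr φ y i l k j) := by
    rw [← sum_hess_mul_gam_mul_gam (hposdef y hy), ← sum_hess_mul_gam_mul_gam (hposdef y hy)]
    simp only [Qlow, Qup, riem, ← Finset.sum_sub_distrib, ← Finset.sum_add_distrib]
    refine Finset.sum_congr rfl fun m _ => ?_
    rw [Finset.sum_sub_distrib]
    ring
  -- The fourth derivatives cancel on each side by symmetry.
  have hF₁ : pd k (pd i (pd l (pd j φ))) y = pd l (pd i (pd k (pd j φ))) y := by
    have hj := contDiffOn_pd hU hφ j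
    rw [pd_comm_inner hU hj hy k i l, pd_comm hU (contDiffOn_pd hU hj i) hy k l,
      pd_comm_inner hU hj hy l k i]
  have hF₂ : pd k (pd i (pd j (pd l φ))) y = pd k (pd j (pd i (pd l φ))) y :=
    pd_comm_inner hU (contDiffOn_pd hU hφ l) hy k i j
  have hA₁ : cubicContr φ y k i l j = cubicContr φ y i k l j :=
    cubicContr_swap_left hU hφ hy k i l j
  have hA₂ : cubicContr φ y l i k j = cubicContr φ y i l k j :=
    cubicContr_swap_left hU hφ hy l i k j
  have hA₃ : cubicContr φ y k i j l = cubicContr φ y i k l j := by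
    rw [cubicContr_swap_left hU hφ hy, cubicContr_swap_right hU hφ hy]
  have hA₄ : cubicContr φ y k j i l = cubicContr φ y i l k j :=
    cubicContr_symm hU hφ (hposdef y hy) hy k j i l
  rw [hlow, Qlow_eq hU hφ hposdef hy, Qlow_eq hU hφ hposdef hy, Qlow_eq hU hφ hposdef hy,
    Qlow_eq hU hφ hposdef hy, hF₁, hF₂, hA₁, hA₂, hA₃, hA₄]
  ring
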